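/- Let R be a semi-local unital ring with two orthogonal Morita-equivalent idempotents e₁, e₂ summing to 1. Then every g ∈ GL(1, R) = R* admits a Gauss decomposition: g ∈ T₁₂·T₂₁·T₁₂·D, where T₁₂ = {1 + a : a ∈ e₁Re₂}, T₂₁ = {1 + b : b ∈ e₂Re₁}, and D = {h ∈ R* : e₁he₂ = e₂he₁ = 0} is the diagonal subgroup. -/

import Mathlib

/-- The two-sided ideal `R·a·R` generated by `a` in a unital ring `R`,
as an additive subgroup: the additive closure of all products `r * a * s`. -/
def idealGen (R : Type*) [Ring R] (a : R) : AddSubgroup R :=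
  AddSubgroup.closure {x : R | ∃ r s : R, x = r * a * s}

lemma aux_lin {D V : Type*} [DivisionRing D] [AddCommGroup V] [Module D V]
    [FiniteDimensional D V] (f h : V →ₗ[D] V)
    (hfh : ∀ v, ∃ a b, f a + h b = v) : ∃ k : V →ₗ[D] V, Function.Bijective (f + h ∘ₗ k) := by
  let q := (LinearMap.range f).mkQ
  have hqs : LinearMap.range (q ∘ₗ h) = ⊤ := by
    rw [LinearMap.range_eq_top]
    intro y
    obtain ⟨v, rfl⟩ := Submodule.mkQ_surjective _ y
    obtain ⟨a, b, rfl⟩ := hfh v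
    refine ⟨b, ?_⟩
    have : q (f a) = 0 := by simp [q]
    change q (h b) = q (f a + h b)
    rw [map_add, this, zero_add]
  obtain ⟨σ, hσ⟩ := (q ∘ₗ h).exists_rightInverse_of_surjective hqs
  obtain ⟨p, hp⟩ := (LinearMap.ker f).subtype.exists_leftInverse_of_injective
    (by simp)
  have hdim : Module.finrank D (LinearMap.ker f) = Module.finrank D (V ⧸ LinearMap.range f) := by
    have h1 := f.finrank_range_add_finrank_ker
    have h2 := (LinearMap.range f).finrank_quotient_add_finrank
    omega
  let ι := LinearEquiv.ofFinrankEq _ _ hdim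
  refine ⟨σ ∘ₗ ι.toLinearMap ∘ₗ p, ?_⟩
  have hinj : Function.Injective (f + h ∘ₗ (σ ∘ₗ ι.toLinearMap ∘ₗ p)) := by
    rw [← LinearMap.ker_eq_bot, LinearMap.ker_eq_bot']
    intro v hv
    have hv' : f v + h (σ (ι (p v))) = 0 := hv
    have h1 : q (h (σ (ι (p v)))) = ι (p v) := LinearMap.congr_fun hσ _
    have h2 : q (f v) = 0 := by simp [q]
    have h3 : ι (p v) = 0 := by rw [← h1, ← map_zero q, ← hv', map_add, h2, zero_add]
    have h4 : p v = 0 := by simpa using h3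
    have h5 : f v = 0 := by simpa [h4] using hv'
    have h6 : p v = ⟨v, h5⟩ := LinearMap.congr_fun hp ⟨v, h5⟩
    rw [h4] at h6
    exact (congrArg Subtype.val h6).symm
  exact ⟨hinj, LinearMap.injective_iff_surjective.mp hinj⟩

lemma aux_mat {D : Type*} [DivisionRing D] {n : ℕ} (x y a b : Matrix (Fin n) (Fin n) D)
    (hab : a * x + b * y = 1) : ∃ t, IsUnit (x + t * y) := by
  obtain ⟨k, hk⟩ := aux_lin x.toLinearMapRight' y.toLinearMapRight' (fun v =>
    ⟨Matrix.vecMul v a, Matrix.vecMul v b, by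
      rw [Matrix.toLinearMapRight'_apply, Matrix.toLinearMapRight'_apply, Matrix.vecMul_vecMul,
        Matrix.vecMul_vecMul, ← Matrix.vecMul_add, hab, Matrix.vecMul_one]⟩)
  let t := LinearMap.toMatrixRight' k
  refine ⟨t, ?_⟩
  have ht : (x + t * y).toLinearMapRight' =
      x.toLinearMapRight' + y.toLinearMapRight' ∘ₗ k := by
    rw [map_add, Matrix.toLinearMapRight'_mul]
    simp [t]
  rw [← ht] at hk
  let E := LinearEquiv.ofBijective _ hk
  let w := LinearMap.toMatrixRight' E.symm.toLinearMap
  have hw : w.toLinearMapRight' = E.symm.toLinearMap := by simp [w]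
  refine ⟨⟨x + t * y, w, ?_, ?_⟩, rfl⟩
  · apply Matrix.toLinearMapRight'.injective
    rw [Matrix.toLinearMapRight'_mul, hw, Matrix.toLinearMapRight'_one]
    exact LinearMap.ext fun v => E.symm_apply_apply v
  · apply Matrix.toLinearMapRight'.injective
    rw [Matrix.toLinearMapRight'_mul, hw, Matrix.toLinearMapRight'_one]
    exact LinearMap.ext fun v => E.apply_symm_apply v

lemma aux_ss {Q : Type*} [Ring Q] [IsSemisimpleRing Q] (x y a b : Q)
    (hab : a * x + b * y = 1) : ∃ t, IsUnit (x + t * y) := by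
  obtain ⟨n, D, d, _, _, ⟨E⟩⟩ := IsSemisimpleRing.exists_ringEquiv_pi_matrix_divisionRing Q
  have h1 : ∀ i, ∃ t, IsUnit (E x i + t * E y i) := fun i =>
    aux_mat (E x i) (E y i) (E a i) (E b i) (by
      have := congrFun (congrArg E hab) i
      simpa using this)
  choose t ht using h1
  refine ⟨E.symm t, ?_⟩
  rw [← MulEquiv.isUnit_map E, Pi.isUnit_iff]
  intro i
  simpa using ht i

lemma aux_lift {R : Type*} [Ring R] (u : R)
    (hu : IsUnit ((⊥ : TwoSidedIdeal R).jacobson.ringCon.mk' u)) : IsUnit u := by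
  set J := (⊥ : TwoSidedIdeal R).jacobson with hJ
  have key : ∀ z : R, J.ringCon.mk' z = 1 → ∃ w, w * z = 1 := by
    intro z hz
    have h1 : z - 1 ∈ J := by
      rw [← TwoSidedIdeal.ker_ringCon_mk' J, TwoSidedIdeal.mem_ker, map_sub, hz, map_one, sub_self]
    obtain ⟨w, hw⟩ := TwoSidedIdeal.mem_jacobson_iff.mp h1 1
    rw [TwoSidedIdeal.mem_bot] at hw
    refine ⟨w, ?_⟩
    rw [← sub_eq_zero, ← hw]
    noncomm_ring
  have key2 : ∀ z : R, J.ringCon.mk' z = 1 → IsUnit z := by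
    intro z hz
    obtain ⟨w, hw⟩ := key z hz
    have hw1 : J.ringCon.mk' w = 1 := by
      have := congrArg J.ringCon.mk' hw
      rwa [map_mul, hz, mul_one, map_one] at this
    obtain ⟨w', hw'⟩ := key w hw1
    have : w' = z := left_inv_eq_right_inv hw' hw
    exact ⟨⟨z, w, this ▸ hw', hw⟩, rfl⟩
  obtain ⟨⟨_, v, h1, h2⟩, rfl⟩ := hu
  obtain ⟨v, rfl⟩ := J.ringCon.mk'_surjective v
  rw [← map_mul] at h1 h2
  obtain ⟨p, hp⟩ := key2 _ h1
  obtain ⟨p', hp'⟩ := key2 _ h2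
  have hr : u * (v * ↑p⁻¹) = 1 := by rw [← mul_assoc, ← hp, Units.mul_inv]
  have hl : (↑p'⁻¹ * v) * u = 1 := by rw [mul_assoc, ← hp', Units.inv_mul]
  exact ⟨⟨u, v * ↑p⁻¹, hr, by rw [← left_inv_eq_right_inv hl hr]; exact hl⟩, rfl⟩

theorem stmt15 {R : Type*} [Ring R]
    -- `R` is semi-local: `R / Jac(R)` is semisimple
    (hsl : IsSemisimpleRing ((⊥ : TwoSidedIdeal R).jacobson.ringCon.Quotient))
    (e₁ e₂ : R) (he₁ : IsIdempotentElem e₁) (he₂ : IsIdempotentElem e₂)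
    (hsum : e₁ + e₂ = 1) (h12 : e₁ * e₂ = 0) (h21 : e₂ * e₁ = 0)
    -- Morita equivalence of `e₁` and `e₂`
    (hm₁ : e₁ ∈ idealGen R e₂) (hm₂ : e₂ ∈ idealGen R e₁) :
    ∀ g : Rˣ, ∃ r r' s : R, ∃ h : Rˣ,
      e₁ * h.val * e₂ = 0 ∧ e₂ * h.val * e₁ = 0 ∧
      g.val = (1 + e₁ * r * e₂) * (1 + e₂ * s * e₁) * (1 + e₁ * r' * e₂) * h.val := by
  intro g
  have E1 : e₁ * e₁ = e₁ := he₁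
  have E2 : e₂ * e₂ = e₂ := he₂
  have A1 : ∀ z, e₁ * (e₁ * z) = e₁ * z := fun z => by rw [← mul_assoc, E1]
  have A2 : ∀ z, e₂ * (e₂ * z) = e₂ * z := fun z => by rw [← mul_assoc, E2]
  have A12 : ∀ z, e₁ * (e₂ * z) = 0 := fun z => by rw [← mul_assoc, h12, zero_mul]
  have A21 : ∀ z, e₂ * (e₁ * z) = 0 := fun z => by rw [← mul_assoc, h21, zero_mul]
  have nil12 : ∀ z, (1 + e₁ * z * e₂) * (1 - e₁ * z * e₂) = 1 := fun z => by
    simp [mul_add, add_mul, mul_sub, sub_mul, mul_assoc, A21]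
  have nil12' : ∀ z, (1 - e₁ * z * e₂) * (1 + e₁ * z * e₂) = 1 := fun z => by
    simp [mul_add, add_mul, mul_sub, sub_mul, mul_assoc, A21]
  have nil21 : ∀ z, (1 + e₂ * z * e₁) * (1 - e₂ * z * e₁) = 1 := fun z => by
    simp [mul_add, add_mul, mul_sub, sub_mul, mul_assoc, A12]
  have nil21' : ∀ z, (1 - e₂ * z * e₁) * (1 + e₂ * z * e₁) = 1 := fun z => by
    simp [mul_add, add_mul, mul_sub, sub_mul, mul_assoc, A12]
  have gi : g⁻¹.val * g.val = 1 := g.inv_mul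
  -- stable rank one
  obtain ⟨t, ht⟩ : ∃ t, IsUnit ((e₁ * g.val * e₁ + e₂) + t * (e₂ * g.val * e₁)) := by
    have hab : (e₁ * g⁻¹.val * e₁ + e₂) * (e₁ * g.val * e₁ + e₂)
        + (e₁ * g⁻¹.val) * (e₂ * g.val * e₁) = 1 := by
      have h1 : e₁ * g⁻¹.val * (e₁ + e₂) * g.val * e₁ = e₁ := by
        rw [hsum, mul_one, mul_assoc e₁, gi, mul_one, E1]
      calc _ = e₁ * g⁻¹.val * (e₁ + e₂) * g.val * e₁ + e₂ := by
            simp only [mul_add, add_mul, mul_assoc, A1, A21, h12, h21, E1, E2, mul_zero,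
              add_zero, zero_add]
            abel
        _ = 1 := by rw [h1, hsum]
    have hab' := congrArg (⊥ : TwoSidedIdeal R).jacobson.ringCon.mk' hab
    rw [map_add, map_mul, map_mul _ (e₁ * g⁻¹.val), map_one] at hab'
    obtain ⟨t, ht⟩ := aux_ss _ _ _ _ hab'
    obtain ⟨t, rfl⟩ := RingCon.mk'_surjective _ t
    refine ⟨t, aux_lift _ ?_⟩
    rwa [map_add, map_mul _ t]
  obtain ⟨u, hu⟩ : IsUnit (e₁ * g.val * e₁ + e₁ * t * e₂ * g.val * e₁ + e₂) := by
    have h2 : IsUnit (1 - e₂ * (t * e₂ * g.val) * e₁) := ⟨⟨_, _, nil21' _, nil21 _⟩, rfl⟩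
    have h3 := ht.mul h2
    convert h3 using 1
    have h4 : t * (e₂ * g.val * e₁) = (e₁ + e₂) * (t * (e₂ * g.val * e₁)) := by
      rw [hsum, one_mul]
    rw [h4]
    simp only [mul_add, add_mul, mul_sub, mul_one, mul_assoc, A2, A12, mul_zero]
    abel
  let v : R := u⁻¹.val
  have uv : u.val * v = 1 := u.mul_inv
  have vu : v * u.val = 1 := u.inv_mul
  have ue1 : u.val * e₁ = e₁ * u.val := by
    rw [hu]
    simp only [mul_add, add_mul, mul_assoc, A1, E1, h12, h21]
  have ve1 : v * e₁ = e₁ * v := by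
    calc v * e₁ = v * (e₁ * (u.val * v)) := by rw [uv, mul_one]
      _ = v * (u.val * e₁ * v) := by rw [ue1, mul_assoc]
      _ = e₁ * v := by rw [← mul_assoc, ← mul_assoc, vu, one_mul]
  obtain ⟨G, hG⟩ : IsUnit ((1 + e₁ * t * e₂) * g.val) :=
    IsUnit.mul ⟨⟨_, _, nil12 _, nil12' _⟩, rfl⟩ g.isUnit
  have G11 : e₁ * G.val * e₁ = u.val * e₁ := by
    rw [hG, hu]
    simp only [mul_add, add_mul, mul_one, one_mul, mul_assoc, A1, E1, h21, add_zero]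
  obtain ⟨H, hH⟩ : IsUnit ((1 - e₂ * (G.val * v) * e₁) * G.val) :=
    IsUnit.mul ⟨⟨_, _, nil21' _, nil21 _⟩, rfl⟩ G.isUnit
  have H1 : e₁ * H.val = e₁ * G.val := by
    rw [hH]
    simp only [sub_mul, mul_sub, one_mul, mul_assoc, A12, sub_zero]
  have H21 : e₂ * H.val * e₁ = 0 := by
    have h1 : e₂ * H.val * e₁ = e₂ * G.val * e₁ - e₂ * (G.val * (v * (e₁ * G.val * e₁))) := by
      rw [hH]
      simp only [sub_mul, mul_sub, one_mul, mul_assoc, A2]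
    rw [h1, G11, ← mul_assoc v, vu, one_mul, mul_assoc, sub_self]
  have He1 : H.val * e₁ = u.val * e₁ := by
    calc H.val * e₁ = (e₁ + e₂) * H.val * e₁ := by rw [hsum, one_mul]
      _ = e₁ * H.val * e₁ + e₂ * H.val * e₁ := by rw [add_mul, add_mul]
      _ = u.val * e₁ := by rw [H21, H1, G11, add_zero]
  obtain ⟨h, hh⟩ : IsUnit (H.val * (1 - e₁ * (v * H.val) * e₂)) :=
    IsUnit.mul H.isUnit ⟨⟨_, _, nil12' _, nil12 _⟩, rfl⟩
  have hh' : h.val = H.val - e₁ * H.val * e₂ := by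
    have h1 : H.val * (e₁ * (v * H.val) * e₂) = e₁ * H.val * e₂ := by
      calc _ = (H.val * e₁) * v * H.val * e₂ := by simp only [mul_assoc]
        _ = e₁ * (u.val * v) * H.val * e₂ := by rw [He1, ue1]; simp only [mul_assoc]
        _ = _ := by rw [uv, mul_one]
    rw [hh, mul_sub, mul_one, h1]
  have D12 : e₁ * h.val * e₂ = 0 := by
    rw [hh']
    simp only [sub_mul, mul_sub, mul_assoc, A1, E2, sub_self]
  have D21 : e₂ * h.val * e₁ = 0 := by
    rw [hh', mul_sub, sub_mul, H21]
    simp only [mul_assoc, A21, zero_mul, sub_self]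
  have he2 : e₂ * h.val = h.val * e₂ := by
    calc e₂ * h.val = e₂ * h.val * (e₁ + e₂) := by rw [hsum, mul_one]
      _ = (e₁ + e₂) * h.val * e₂ := by rw [mul_add, D21, add_mul, add_mul, D12]
      _ = h.val * e₂ := by rw [hsum, one_mul]
  refine ⟨-t, H.val * h⁻¹.val, G.val * v, h, D12, D21, ?_⟩
  have F3 : (1 + e₁ * (H.val * h⁻¹.val) * e₂) * h.val = H.val := by
    have h1 : e₁ * (H.val * h⁻¹.val) * e₂ * h.val = e₁ * H.val * e₂ := by
      calc _ = e₁ * H.val * h⁻¹.val * (e₂ * h.val) := by simp only [mul_assoc]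
        _ = e₁ * H.val * (h⁻¹.val * h.val) * e₂ := by rw [he2]; simp only [mul_assoc]
        _ = _ := by rw [h.inv_mul, mul_one]
    rw [add_mul, h1, one_mul, hh', sub_add_cancel]
  have F0 : 1 + e₁ * -t * e₂ = 1 - e₁ * t * e₂ := by noncomm_ring
  rw [mul_assoc, F3, hH, mul_assoc, ← mul_assoc (1 + e₂ * (G.val * v) * e₁), nil21, one_mul, hG,
    F0, ← mul_assoc, nil12', one_mul]
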